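/- Let θ ∈ [0,2π), α, β, χ, ξ ∈ ℂ. Let a, b ∈ ℍ, a ≠ 0, and d ∈ ℂ∖{0}, and let T(z) := (az+b)d^{−1} map a domain Ξ ⊆ ℍ bijectively onto a domain Ω ⊆ ℍ. Assume the chain rule ${}^θ𝒟_z[\,d̄·(F∘T)\,] = ā·(({}^θ𝒟 F)∘T)$ holds on Ξ for every F ∈ C¹(Ω,ℍ). Write ā^{−1}(χ + (ie^{iθ}j)ξ)d̄ = δ₁ + (ie^{iθ}j)δ₂ with δ₁, δ₂ ∈ ℂ. Then for every f ∈ C¹(Ω,ℂ): f satisfies ∂f/∂ζ̄₁ = −δ₁ f and ∂f/∂ζ̄₂ = −δ₂ f on Ω if and only if the function $g(z) := e^{\mathrm{Re}(\overline{(χ−α)}\,z₁ + \overline{(ξ−β)}\,z₂)}\,d̄\,f(T(z))$ satisfies ∂g/∂z̄₁ = −α g and ∂g/∂z̄₂ = −β g on Ξ (here z = z₁ + (ie^{iθ}j)z₂ ∈ Ξ with z₁, z₂ ∈ ℂ). -/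

import Mathlib

open MeasureTheory

noncomputable section

/-- The real quaternions `ℍ`. -/
abbrev H4 : Type := Quaternion ℝ

instance : MeasurableSpace H4 := borel _
instance : BorelSpace H4 := ⟨rfl⟩

/-- The quaternion unit `i`. -/
def qI : H4 := ⟨0, 1, 0, 0⟩
/-- The quaternion unit `j`. -/
def qJ : H4 := ⟨0, 0, 1, 0⟩
/-- `e^{iθ} = cos θ + (sin θ) i` as a quaternion. -/
def eIθ (θ : ℝ) : H4 := ⟨Real.cos θ, Real.sin θ, 0, 0⟩
/-- The basis direction `i e^{iθ} j`. -/
def e2 (θ : ℝ) : H4 := qI * eIθ θ * qJ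
/-- The basis direction `e^{iθ} j`. -/
def e3 (θ : ℝ) : H4 := eIθ θ * qJ

/-- Third θ-coordinate of a quaternion `z = x₀ + x₁ i + x₂ (i e^{iθ} j) + x₃ (e^{iθ} j)`. -/
def x2θ (θ : ℝ) (z : H4) : ℝ := -z.imJ * Real.sin θ + z.imK * Real.cos θ
/-- Fourth θ-coordinate of a quaternion. -/
def x3θ (θ : ℝ) (z : H4) : ℝ := z.imJ * Real.cos θ + z.imK * Real.sin θ

/-- The θ-inner product `⟨u,z⟩_θ`: the dot product of θ-coordinates. -/
def innerθ (θ : ℝ) (u z : H4) : ℝ :=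
  u.re * z.re + u.imI * z.imI + x2θ θ u * x2θ θ z + x3θ θ u * x3θ θ z

/-- Left θ-Cauchy–Riemann operator
`{}^θ𝒟 f = ∂f/∂x₀ + i ∂f/∂x₁ + (i e^{iθ} j) ∂f/∂x₂ + (e^{iθ} j) ∂f/∂x₃`. -/
def Dl (θ : ℝ) (f : H4 → H4) (z : H4) : H4 :=
  fderiv ℝ f z 1 + qI * fderiv ℝ f z qI + e2 θ * fderiv ℝ f z (e2 θ) +
    e3 θ * fderiv ℝ f z (e3 θ)

/-- Left (θ,u)-Cauchy–Riemann operator `{}^θ_u𝒟 f = {}^θ𝒟 f + u f`. -/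
def Dlu (θ : ℝ) (u : H4) (f : H4 → H4) (z : H4) : H4 := Dl θ f z + u * f z

/-- Right θ-Cauchy–Riemann operator. -/
def Dr (θ : ℝ) (f : H4 → H4) (z : H4) : H4 :=
  fderiv ℝ f z 1 + fderiv ℝ f z qI * qI + fderiv ℝ f z (e2 θ) * e2 θ +
    fderiv ℝ f z (e3 θ) * e3 θ

/-- Right (θ,u)-Cauchy–Riemann operator `{}^θ𝒟_{r,u} f = {}^θ𝒟_r f + f u`. -/
def Dru (θ : ℝ) (u : H4) (f : H4 → H4) (z : H4) : H4 := Dr θ f z + f z * u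

/-- Embedding of ℂ into the quaternions, `ℂ ≅ ℝ + ℝi ⊂ ℍ`. -/
def toH (a : ℂ) : H4 := ⟨a.re, a.im, 0, 0⟩

/-- First complex θ-component of a quaternion: `z₁ = x₀ + x₁ i`. -/
def c1 (z : H4) : ℂ := ⟨z.re, z.imI⟩
/-- Second complex θ-component of a quaternion: `z₂ = x₂ + x₃ i`. -/
def c2 (θ : ℝ) (z : H4) : ℂ := ⟨x2θ θ z, x3θ θ z⟩

/-- Wirtinger operator `∂/∂z̄₁ = ∂/∂x₀ + i ∂/∂x₁` on ℂ-valued functions. -/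
def db1 (f : H4 → ℂ) (z : H4) : ℂ := fderiv ℝ f z 1 + Complex.I * fderiv ℝ f z qI
/-- Wirtinger operator `∂/∂z̄₂ = ∂/∂x₂ + i ∂/∂x₃` on ℂ-valued functions. -/
def db2 (θ : ℝ) (f : H4 → ℂ) (z : H4) : ℂ :=
  fderiv ℝ f z (e2 θ) + Complex.I * fderiv ℝ f z (e3 θ)
/-- Wirtinger operator `∂/∂z₂ = ∂/∂x₂ − i ∂/∂x₃` on ℂ-valued functions. -/
def dz2 (θ : ℝ) (f : H4 → ℂ) (z : H4) : ℂ :=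
  fderiv ℝ f z (e2 θ) - Complex.I * fderiv ℝ f z (e3 θ)

/-- `e^{iθ}` as a complex number. -/
def cexpI (θ : ℝ) : ℂ := ⟨Real.cos θ, Real.sin θ⟩

/-- The weight function `z ↦ e^{Re(conj(χ−α) z₁ + conj(ξ−β) z₂)} d̄ f(T z)` of Statement 17. -/
def g17 (θ : ℝ) (α β χ ξ : ℂ) (d : ℂ) (f : H4 → ℂ) (T : H4 → H4) (w : H4) : ℂ :=
  Real.exp (((starRingEnd ℂ) (χ - α) * c1 w + (starRingEnd ℂ) (ξ - β) * c2 θ w).re) •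
    ((starRingEnd ℂ) d * f (T w))

@[simp] theorem toH_re_val (x : ℂ) : (toH x).re = x.re := rfl
@[simp] theorem toH_imI_val (x : ℂ) : (toH x).imI = x.im := rfl
@[simp] theorem toH_imJ_val (x : ℂ) : (toH x).imJ = 0 := rfl
@[simp] theorem toH_imK_val (x : ℂ) : (toH x).imK = 0 := rfl
@[simp] theorem qI_re_val : (qI).re = 0 := rfl
@[simp] theorem qI_imI_val : (qI).imI = 1 := rfl
@[simp] theorem qI_imJ_val : (qI).imJ = 0 := rfl
@[simp] theorem qI_imK_val : (qI).imK = 0 := rfl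
@[simp] theorem qJ_re_val : (qJ).re = 0 := rfl
@[simp] theorem qJ_imI_val : (qJ).imI = 0 := rfl
@[simp] theorem qJ_imJ_val : (qJ).imJ = 1 := rfl
@[simp] theorem qJ_imK_val : (qJ).imK = 0 := rfl
@[simp] theorem eIθ_re_val (θ : ℝ) : (eIθ θ).re = Real.cos θ := rfl
@[simp] theorem eIθ_imI_val (θ : ℝ) : (eIθ θ).imI = Real.sin θ := rfl
@[simp] theorem eIθ_imJ_val (θ : ℝ) : (eIθ θ).imJ = 0 := rfl
@[simp] theorem eIθ_imK_val (θ : ℝ) : (eIθ θ).imK = 0 := rfl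
@[simp] theorem q0_re_val : (0 : H4).re = 0 := rfl
@[simp] theorem q0_imI_val : (0 : H4).imI = 0 := rfl
@[simp] theorem q0_imJ_val : (0 : H4).imJ = 0 := rfl
@[simp] theorem q0_imK_val : (0 : H4).imK = 0 := rfl
@[simp] theorem q1_re_val : (1 : H4).re = 1 := rfl
@[simp] theorem q1_imI_val : (1 : H4).imI = 0 := rfl
@[simp] theorem q1_imJ_val : (1 : H4).imJ = 0 := rfl
@[simp] theorem q1_imK_val : (1 : H4).imK = 0 := rfl

/-- `toH` as a continuous linear map. -/
def toHL : ℂ →L[ℝ] H4 :=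
  LinearMap.toContinuousLinearMap
    { toFun := toH
      map_add' := fun x y => by apply Quaternion.ext <;> simp
      map_smul' := fun r x => by apply Quaternion.ext <;> simp }

theorem toHL_apply (x : ℂ) : toHL x = toH x := rfl

/-- The exponent as a continuous linear map. -/
def expL (θ : ℝ) (u v : ℂ) : H4 →L[ℝ] ℝ :=
  LinearMap.toContinuousLinearMap
    { toFun := fun w => ((starRingEnd ℂ) u * c1 w + (starRingEnd ℂ) v * c2 θ w).re
      map_add' := fun x y => by simp [c1, c2, x2θ, x3θ]; ring
      map_smul' := fun r x => by simp [c1, c2, x2θ, x3θ]; ring }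

theorem expL_apply (θ : ℝ) (u v : ℂ) (w : H4) :
    expL θ u v w = ((starRingEnd ℂ) u * c1 w + (starRingEnd ℂ) v * c2 θ w).re := rfl

theorem toH_mul (x y : ℂ) : toH (x * y) = toH x * toH y := by
  apply Quaternion.ext <;> simp

theorem toH_star (x : ℂ) : toH ((starRingEnd ℂ) x) = star (toH x) := by
  apply Quaternion.ext <;> simp

theorem toH_add (x y : ℂ) : toH (x + y) = toH x + toH y := by
  apply Quaternion.ext <;> simp

theorem e2_mul_I (θ : ℝ) : e2 θ * toH Complex.I = e3 θ := by
  apply Quaternion.ext <;> simp [e2, e3]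

theorem toH_I : toH Complex.I = qI := by
  apply Quaternion.ext <;> simp

theorem decomp_zero (θ : ℝ) (x y : ℂ) : toH x + e2 θ * toH y = 0 ↔ x = 0 ∧ y = 0 := by
  constructor
  · intro h
    have h0 := congrArg (fun q : H4 => q.re) h
    have h1 := congrArg (fun q : H4 => q.imI) h
    have h2 := congrArg (fun q : H4 => q.imJ) h
    have h3 := congrArg (fun q : H4 => q.imK) h
    simp [e2] at h0 h1 h2 h3
    have hs := Real.sin_sq_add_cos_sq θ
    refine ⟨Complex.ext h0 h1, Complex.ext ?_ ?_⟩
    · show y.re = 0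
      linear_combination (-y.re) * hs - Real.sin θ * h2 + Real.cos θ * h3
    · show y.im = 0
      linear_combination (-y.im) * hs + Real.cos θ * h2 + Real.sin θ * h3
  · rintro ⟨rfl, rfl⟩
    apply Quaternion.ext <;> simp

theorem Dl_toH (θ : ℝ) (f : H4 → ℂ) (z : H4) (hf : DifferentiableAt ℝ f z) :
    Dl θ (fun w => toH (f w)) z = toH (db1 f z) + e2 θ * toH (db2 θ f z) := by
  have h : HasFDerivAt (fun w => toH (f w)) (toHL.comp (fderiv ℝ f z)) z :=
    toHL.hasFDerivAt.comp z hf.hasFDerivAt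
  unfold Dl db1 db2
  rw [h.fderiv]
  simp only [ContinuousLinearMap.comp_apply, toHL_apply, toH_add, toH_mul, toH_I, mul_add]
  rw [← toH_I, ← mul_assoc (e2 θ), e2_mul_I]
  abel

theorem cond_iff (θ : ℝ) (f : H4 → ℂ) (z : H4) (hf : DifferentiableAt ℝ f z) (u v : ℂ) :
    (db1 f z = -u * f z ∧ db2 θ f z = -v * f z) ↔
      Dl θ (fun w => toH (f w)) z + (toH u + e2 θ * toH v) * toH (f z) = 0 := by
  have : Dl θ (fun w => toH (f w)) z + (toH u + e2 θ * toH v) * toH (f z) =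
      toH (db1 f z + u * f z) + e2 θ * toH (db2 θ f z + v * f z) := by
    rw [Dl_toH θ f z hf]
    simp only [toH_add, toH_mul, add_mul, mul_add, mul_assoc]
    abel
  rw [this, decomp_zero, neg_mul, neg_mul, eq_neg_iff_add_eq_zero, eq_neg_iff_add_eq_zero]

theorem weight_iff (θ : ℝ) (α β χ ξ : ℂ) (h : H4 → ℂ) (z : H4) (hh : DifferentiableAt ℝ h z)
    (g : H4 → ℂ) (hg : g = fun w => Real.exp (expL θ (χ - α) (ξ - β) w) • h w) :
    (db1 h z = -χ * h z ∧ db2 θ h z = -ξ * h z) ↔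
      (db1 g z = -α * g z ∧ db2 θ g z = -β * g z) := by
  have hd := ((expL θ (χ - α) (ξ - β)).hasFDerivAt (x := z)).exp.smul hh.hasFDerivAt
  have hg' : fderiv ℝ g z =
      Real.exp (expL θ (χ - α) (ξ - β) z) • fderiv ℝ h z +
        ContinuousLinearMap.smulRight
          (Real.exp (expL θ (χ - α) (ξ - β) z) • expL θ (χ - α) (ξ - β)) (h z) := by
    rw [hg]; exact hd.fderiv
  have hs := Real.sin_sq_add_cos_sq θ
  have E0 : expL θ (χ - α) (ξ - β) 1 = (χ - α).re := by
    simp [expL_apply, c1, c2, x2θ, x3θ]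
  have E1 : expL θ (χ - α) (ξ - β) qI = (χ - α).im := by
    simp [expL_apply, c1, c2, x2θ, x3θ]
    ring
  have E2 : expL θ (χ - α) (ξ - β) (e2 θ) = (ξ - β).re := by
    simp [expL_apply, c1, c2, x2θ, x3θ, e2]
    linear_combination (ξ.re - β.re) * hs
  have E3 : expL θ (χ - α) (ξ - β) (e3 θ) = (ξ - β).im := by
    simp [expL_apply, c1, c2, x2θ, x3θ, e3]
    linear_combination (ξ.im - β.im) * hs
  have hne : (Real.exp (expL θ (χ - α) (ξ - β) z) : ℂ) ≠ 0 := by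
    exact_mod_cast (Real.exp_pos _).ne'
  have hgz : g z = (Real.exp (expL θ (χ - α) (ξ - β) z) : ℂ) * h z := by
    rw [hg]; exact Complex.real_smul
  have k1 : db1 g z - -α * g z =
      (Real.exp (expL θ (χ - α) (ξ - β) z) : ℂ) * (db1 h z - -χ * h z) := by
    have hu := Complex.re_add_im (χ - α)
    unfold db1
    rw [hg', hgz]
    simp only [ContinuousLinearMap.add_apply, ContinuousLinearMap.smul_apply,
      ContinuousLinearMap.smulRight_apply, E0, E1, Complex.real_smul, smul_eq_mul,
      Complex.ofReal_mul]
    linear_combination (Real.exp (expL θ (χ - α) (ξ - β) z) : ℂ) * h z * hu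
  have k2 : db2 θ g z - -β * g z =
      (Real.exp (expL θ (χ - α) (ξ - β) z) : ℂ) * (db2 θ h z - -ξ * h z) := by
    have hu := Complex.re_add_im (ξ - β)
    unfold db2
    rw [hg', hgz]
    simp only [ContinuousLinearMap.add_apply, ContinuousLinearMap.smul_apply,
      ContinuousLinearMap.smulRight_apply, E2, E3, Complex.real_smul, smul_eq_mul,
      Complex.ofReal_mul]
    linear_combination (Real.exp (expL θ (χ - α) (ξ - β) z) : ℂ) * h z * hu
  rw [← sub_eq_zero (a := db1 g z), ← sub_eq_zero (a := db2 θ g z), k1, k2,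
    mul_eq_zero_iff_left hne, mul_eq_zero_iff_left hne, sub_eq_zero, sub_eq_zero]

/-- conformal covariance of (δ₁,δ₂)-holomorphy under the affine Möbius map
`T(z) = (az+b)d⁻¹`, where `ā⁻¹(χ + (ie^{iθ}j)ξ)d̄ = δ₁ + (ie^{iθ}j)δ₂`. -/
theorem statement17 (θ : ℝ) (hθ : θ ∈ Set.Ico 0 (2 * Real.pi)) (α β χ ξ : ℂ)
    (a b : H4) (ha : a ≠ 0) (d : ℂ) (hd : d ≠ 0)
    (Ξ Ω : Set H4) (hΞo : IsOpen Ξ) (hΞc : IsConnected Ξ)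
    (hΩo : IsOpen Ω) (hΩc : IsConnected Ω)
    (T : H4 → H4) (hTdef : ∀ z, T z = (a * z + b) * (toH d)⁻¹)
    (hTbij : Set.BijOn T Ξ Ω)
    (hchain : ∀ F : H4 → H4, ContDiffOn ℝ 1 F Ω →
      ∀ z ∈ Ξ, Dl θ (fun w => star (toH d) * F (T w)) z = star a * Dl θ F (T z))
    (δ₁ δ₂ : ℂ)
    (hδ : (star a)⁻¹ * (toH χ + e2 θ * toH ξ) * star (toH d) = toH δ₁ + e2 θ * toH δ₂)
    (f : H4 → ℂ) (hf : ContDiffOn ℝ 1 f Ω) :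
    (∀ ζ ∈ Ω, db1 f ζ = -δ₁ * f ζ ∧ db2 θ f ζ = -δ₂ * f ζ) ↔
    (∀ z ∈ Ξ,
      db1 (g17 θ α β χ ξ d f T) z = -α * g17 θ α β χ ξ d f T z ∧
      db2 θ (g17 θ α β χ ξ d f T) z = -β * g17 θ α β χ ξ d f T z) := by
  have hsa : star a ≠ 0 := by simpa using ha
  have key : ∀ z ∈ Ξ, (db1 f (T z) = -δ₁ * f (T z) ∧ db2 θ f (T z) = -δ₂ * f (T z)) ↔
      (db1 (g17 θ α β χ ξ d f T) z = -α * g17 θ α β χ ξ d f T z ∧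
      db2 θ (g17 θ α β χ ξ d f T) z = -β * g17 θ α β χ ξ d f T z) := by
    intro z hz
    have hTz : T z ∈ Ω := hTbij.mapsTo hz
    have hfd : DifferentiableAt ℝ f (T z) :=
      (hf.differentiableOn one_ne_zero).differentiableAt (hΩo.mem_nhds hTz)
    have hTd : DifferentiableAt ℝ T z := by
      have : T = fun z => (a * z + b) * (toH d)⁻¹ := funext hTdef
      rw [this]
      exact ((differentiableAt_id.const_mul a).add_const b).mul_const _
    have hcomp : DifferentiableAt ℝ (fun w => (starRingEnd ℂ) d * f (T w)) z :=
      (DifferentiableAt.comp z hfd hTd).const_mul _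
    rw [← weight_iff θ α β χ ξ (fun w => (starRingEnd ℂ) d * f (T w)) z hcomp
      (g17 θ α β χ ξ d f T) rfl,
      cond_iff θ f (T z) hfd, cond_iff θ _ z hcomp]
    have hF : ContDiffOn ℝ 1 (fun w => toH (f w)) Ω := toHL.contDiff.comp_contDiffOn hf
    have hc := hchain _ hF z hz
    have hfun : (fun w => toH ((starRingEnd ℂ) d * f (T w))) =
        fun w => star (toH d) * toH (f (T w)) := by
      funext w
      rw [toH_mul, toH_star]
    rw [hfun, hc, toH_mul, toH_star, ← hδ]
    have e : star a * Dl θ (fun w => toH (f w)) (T z) +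
        (toH χ + e2 θ * toH ξ) * (star (toH d) * toH (f (T z))) =
        star a * (Dl θ (fun w => toH (f w)) (T z) +
        (star a)⁻¹ * (toH χ + e2 θ * toH ξ) * star (toH d) * toH (f (T z))) := by
      rw [mul_add]
      simp only [mul_assoc]
      rw [mul_inv_cancel_left₀ hsa]
    rw [e, mul_eq_zero_iff_left hsa]
  constructor
  · intro H z hz
    exact (key z hz).1 (H _ (hTbij.mapsTo hz))
  · intro H ζ hζ
    obtain ⟨z, hz, rfl⟩ := hTbij.surjOn hζ
    exact (key z hz).2 (H z hz)

end
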